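/- arXiv:2106.05327 — 5 statements merged into one kernel-verified Lean document; each statement's English description precedes it below -/
import Mathlib

section
/- Let ω, η, α : ℝ → ℝ with η and α twice differentiable, η''(t) + ω(t)² η(t) = 0 for all t, α''(t) + ω(t)² α(t) = 1/α(t)³ for all t, and α(t) ≠ 0 for all t. Then the Ermakov–Lewis invariant I(t) = (1/2)·[(η'(t)·α(t) − η(t)·α'(t))² + (η(t)/α(t))²] is constant, i.e. I(t) = I(0) for all t ∈ ℝ. -/
/-!
Let `W = α * η' - α' * η`. The terms with `ω ^ 2` cancel in `W'`, leaving only the contribution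
`-η / α ^ 3` of the Pinney nonlinearity, while the quotient rule gives `(η / α)' = W / α ^ 2`.
Hence `W * W' = -(η / α) * (η / α)'`, so `W ^ 2 + (η / α) ^ 2` has zero derivative.
-/

/-- The Wronskian `f * g' - f' * g` of two functions. It is meaningful only where both are
differentiable, since `deriv` is `0` elsewhere. -/
noncomputable def wronskian {𝕜 : Type*} [NontriviallyNormedField 𝕜] (f g : 𝕜 → 𝕜) (t : 𝕜) : 𝕜 :=
  f t * deriv g t - deriv f t * g t

/-- The Ermakov–Lewis invariant `I` of a solution `η` of the linear oscillator equation and a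
solution `α` of the Ermakov–Pinney equation, written with the Wronskian of `α` and `η`. -/
noncomputable def ermakovLewis {𝕜 : Type*} [NontriviallyNormedField 𝕜] (η α : 𝕜 → 𝕜) (t : 𝕜) : 𝕜 :=
  (1 / 2) * (wronskian α η t ^ 2 + (η t / α t) ^ 2)

section Pointwise

variable {𝕜 : Type*} [NontriviallyNormedField 𝕜] {f g η α : 𝕜 → 𝕜} {q t : 𝕜}

theorem hasDerivAt_wronskian
    (hf : DifferentiableAt 𝕜 f t) (hf' : DifferentiableAt 𝕜 (deriv f) t)
    (hg : DifferentiableAt 𝕜 g t) (hg' : DifferentiableAt 𝕜 (deriv g) t) :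
    HasDerivAt (wronskian f g) (f t * deriv (deriv g) t - deriv (deriv f) t * g t) t :=
  ((hf.hasDerivAt.fun_mul hg'.hasDerivAt).fun_sub
    (hf'.hasDerivAt.fun_mul hg.hasDerivAt)).congr_deriv (by ring)

theorem hasDerivAt_div_wronskian_div_sq
    (hf : DifferentiableAt 𝕜 f t) (hg : DifferentiableAt 𝕜 g t) (hft : f t ≠ 0) :
    HasDerivAt (fun s ↦ g s / f s) (wronskian f g t / f t ^ 2) t :=
  (hg.hasDerivAt.fun_div hf.hasDerivAt hft).congr_deriv (by rw [wronskian]; ring)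

theorem hasDerivAt_wronskian_of_ermakovPinney
    (hη : DifferentiableAt 𝕜 η t) (hη' : DifferentiableAt 𝕜 (deriv η) t)
    (hα : DifferentiableAt 𝕜 α t) (hα' : DifferentiableAt 𝕜 (deriv α) t)
    (hηeq : deriv (deriv η) t + q * η t = 0)
    (hαeq : deriv (deriv α) t + q * α t = 1 / α t ^ 3) :
    HasDerivAt (wronskian α η) (-(η t / α t ^ 3)) t :=
  (hasDerivAt_wronskian hα hα' hη hη').congr_deriv <| by
    linear_combination α t * hηeq - η t * hαeq

theorem hasDerivAt_ermakovLewis_zero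
    (hη : DifferentiableAt 𝕜 η t) (hη' : DifferentiableAt 𝕜 (deriv η) t)
    (hα : DifferentiableAt 𝕜 α t) (hα' : DifferentiableAt 𝕜 (deriv α) t) (hαt : α t ≠ 0)
    (hηeq : deriv (deriv η) t + q * η t = 0)
    (hαeq : deriv (deriv α) t + q * α t = 1 / α t ^ 3) :
    HasDerivAt (ermakovLewis η α) 0 t := by
  have hW := hasDerivAt_wronskian_of_ermakovPinney hη hη' hα hα' hηeq hαeq
  have hquot := hasDerivAt_div_wronskian_div_sq hα hη hαt
  refine (((hW.fun_pow 2).fun_add (hquot.fun_pow 2)).const_mul (1 / 2)).congr_deriv ?_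
  ring

end Pointwise

theorem ermakov_lewis_invariant_constant_general {𝕜 : Type*} [RCLike 𝕜] {s : Set 𝕜}
    (hs : IsOpen s) (hs' : IsPreconnected s) {q η α : 𝕜 → 𝕜}
    (hη : ∀ t ∈ s, DifferentiableAt 𝕜 η t) (hη' : ∀ t ∈ s, DifferentiableAt 𝕜 (deriv η) t)
    (hα : ∀ t ∈ s, DifferentiableAt 𝕜 α t) (hα' : ∀ t ∈ s, DifferentiableAt 𝕜 (deriv α) t)
    (hαne : ∀ t ∈ s, α t ≠ 0)
    (hηeq : ∀ t ∈ s, deriv (deriv η) t + q t * η t = 0)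
    (hαeq : ∀ t ∈ s, deriv (deriv α) t + q t * α t = 1 / α t ^ 3)
    {t t₀ : 𝕜} (ht : t ∈ s) (ht₀ : t₀ ∈ s) :
    ermakovLewis η α t = ermakovLewis η α t₀ := by
  have hderiv : ∀ r ∈ s, HasDerivAt (ermakovLewis η α) 0 r := fun r hr ↦
    hasDerivAt_ermakovLewis_zero (hη r hr) (hη' r hr) (hα r hr) (hα' r hr) (hαne r hr)
      (hηeq r hr) (hαeq r hr)
  exact hs.is_const_of_deriv_eq_zero hs'
    (fun r hr ↦ (hderiv r hr).differentiableAt.differentiableWithinAt)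
    (fun r hr ↦ (hderiv r hr).deriv) ht ht₀

/-- The Ermakov–Lewis invariant
`I(t) = (1/2)·[(η'(t)·α(t) − η(t)·α'(t))² + (η(t)/α(t))²]`
is constant along solutions of the linear oscillator and Ermakov–Pinney equations. -/
theorem ermakov_lewis_invariant_constant
    (ω η α : ℝ → ℝ)
    (hη : Differentiable ℝ η) (hη' : Differentiable ℝ (deriv η))
    (hα : Differentiable ℝ α) (hα' : Differentiable ℝ (deriv α))
    (hαne : ∀ t, α t ≠ 0)
    (hηeq : ∀ t, deriv (deriv η) t + (ω t) ^ 2 * η t = 0)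
    (hαeq : ∀ t, deriv (deriv α) t + (ω t) ^ 2 * α t = 1 / (α t) ^ 3) :
    ∀ t : ℝ,
      (1 / 2) * ((deriv η t * α t - η t * deriv α t) ^ 2 + (η t / α t) ^ 2)
        = (1 / 2) * ((deriv η 0 * α 0 - η 0 * deriv α 0) ^ 2 + (η 0 / α 0) ^ 2) := by
  intro t
  simpa only [ermakovLewis, wronskian, mul_comm (α _), mul_comm (deriv α _)] using
    ermakov_lewis_invariant_constant_general isOpen_univ isPreconnected_univ
      (fun r _ ↦ hη r) (fun r _ ↦ hη' r) (fun r _ ↦ hα r) (fun r _ ↦ hα' r)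
      (fun r _ ↦ hαne r) (fun r _ ↦ hηeq r) (fun r _ ↦ hαeq r) (Set.mem_univ t) (Set.mem_univ 0)
end

section
/- Let ω, η₁, η₂ : ℝ → ℝ with η₁ and η₂ twice differentiable, η₁''(t) + ω(t)² η₁(t) = 0 and η₂''(t) + ω(t)² η₂(t) = 0 for all t, and suppose the Wronskian η₁(t)·η₂'(t) − η₁'(t)·η₂(t) = 1 for all t. Fix real numbers α₀ > 0 and d₀. Then the quantity (d₀² + 1/α₀²)·η₁(t)² + α₀²·η₂(t)² + 2·d₀·α₀·η₁(t)·η₂(t) is strictly positive for every t, and the function α(t) = sqrt((d₀² + 1/α₀²)·η₁(t)² + α₀²·η₂(t)² + 2·d₀·α₀·η₁(t)·η₂(t)) satisfies the Ermakov–Pinney equation α''(t) + ω(t)² α(t) = 1/α(t)³ for all t. -/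
/-!
Completing the square, the radicand is `u² + v²` with `u = η₁ / α₀` and `v = α₀ η₂ + d₀ η₁`. These
are again solutions of the linear oscillator equation, with the same Wronskian as `η₁`, `η₂`. So `α`
is the modulus of the planar motion `(u, v)` in a central force field, its angular momentum is the
Wronskian `w`, and the radial equation of motion is `α'' + ω² α = w² / α³`.
-/

open Filter Topology

theorem hasDerivAt_deriv_sqrt {Q Q' : ℝ → ℝ} {Q'' t : ℝ} (hQ : ∀ᶠ s in 𝓝 t, HasDerivAt Q (Q' s) s)
    (hQ' : HasDerivAt Q' Q'' t) (hpos : 0 < Q t) :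
    HasDerivAt (deriv fun s => √(Q s)) ((2 * Q t * Q'' - Q' t ^ 2) / (4 * √(Q t) ^ 3)) t := by
  have hQt : HasDerivAt Q (Q' t) t := hQ.self_of_nhds
  have hderiv : (deriv fun s => √(Q s)) =ᶠ[𝓝 t] fun s => Q' s / (2 * √(Q s)) := by
    filter_upwards [hQ, hQt.continuousAt.eventually_ne hpos.ne'] with s hs hs₀
    exact (hs.sqrt hs₀).deriv
  have hsqrt : 0 < √(Q t) := Real.sqrt_pos.2 hpos
  have hsq : √(Q t) ^ 2 = Q t := Real.sq_sqrt hpos.le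
  have hquot := hQ'.fun_div ((hQt.sqrt hpos.ne').const_mul 2) (mul_pos two_pos hsqrt).ne'
  refine (hquot.congr_of_eventuallyEq hderiv).congr_deriv ?_
  field_simp
  rw [hsq]
  ring

theorem hasDerivAt_deriv_sqrt_sq_add_sq {u v u' v' : ℝ → ℝ} {k t : ℝ}
    (hu : ∀ᶠ s in 𝓝 t, HasDerivAt u (u' s) s) (hu' : HasDerivAt u' (-(k * u t)) t)
    (hv : ∀ᶠ s in 𝓝 t, HasDerivAt v (v' s) s) (hv' : HasDerivAt v' (-(k * v t)) t)
    (hpos : 0 < u t ^ 2 + v t ^ 2) :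
    HasDerivAt (deriv fun s => √(u s ^ 2 + v s ^ 2))
      ((u t * v' t - u' t * v t) ^ 2 / √(u t ^ 2 + v t ^ 2) ^ 3
        - k * √(u t ^ 2 + v t ^ 2)) t := by
  have hfirst : ∀ᶠ s in 𝓝 t, HasDerivAt (fun s => u s ^ 2 + v s ^ 2)
      (2 * (u s * u' s + v s * v' s)) s := by
    filter_upwards [hu, hv] with s hus hvs
    exact ((hus.fun_pow 2).fun_add (hvs.fun_pow 2)).congr_deriv (by push_cast; ring)
  have hsecond : HasDerivAt (fun s => 2 * (u s * u' s + v s * v' s))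
      (2 * (u' t ^ 2 + v' t ^ 2 - k * (u t ^ 2 + v t ^ 2))) t :=
    (((hu.self_of_nhds.fun_mul hu').fun_add (hv.self_of_nhds.fun_mul hv')).const_mul 2).congr_deriv
      (by ring)
  have hlagrange : (u t ^ 2 + v t ^ 2) * (u' t ^ 2 + v' t ^ 2) - (u t * u' t + v t * v' t) ^ 2
      = (u t * v' t - u' t * v t) ^ 2 := by ring
  refine (hasDerivAt_deriv_sqrt hfirst hsecond hpos).congr_deriv ?_
  have hsqrt : 0 < √(u t ^ 2 + v t ^ 2) := Real.sqrt_pos.2 hpos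
  have hsq : √(u t ^ 2 + v t ^ 2) ^ 2 = u t ^ 2 + v t ^ 2 := Real.sq_sqrt hpos.le
  rw [← hlagrange]
  generalize √(u t ^ 2 + v t ^ 2) = r at hsqrt hsq ⊢
  rw [← hsq]
  field_simp
  ring

theorem sq_add_sq_pos_of_wronskian_ne_zero {R : Type*} [CommRing R] [LinearOrder R]
    [IsStrictOrderedRing R] {x y x' y' : R} (hw : x * y' - x' * y ≠ 0) : 0 < x ^ 2 + y ^ 2 := by
  refine (add_nonneg (sq_nonneg x) (sq_nonneg y)).lt_of_ne' fun h => hw ?_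
  obtain ⟨rfl, rfl⟩ : x = 0 ∧ y = 0 := by
    simpa using (add_eq_zero_iff_of_nonneg (sq_nonneg x) (sq_nonneg y)).1 h
  ring

section CompleteSquare

variable {K : Type*} [Field K] {a : K}

theorem radicand_eq_sq_add_sq (ha : a ≠ 0) (d x y : K) :
    (d ^ 2 + 1 / a ^ 2) * x ^ 2 + a ^ 2 * y ^ 2 + 2 * d * a * x * y
      = (x / a) ^ 2 + (a * y + d * x) ^ 2 := by
  field_simp
  ring

theorem wronskian_div_mul_add_mul (ha : a ≠ 0) (d x y x' y' : K) :
    x / a * (a * y' + d * x') - x' / a * (a * y + d * x) = x * y' - x' * y := by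
  field_simp
  ring

end CompleteSquare

theorem wave_packet_width_solves_ermakov_pinney_general {η₁ η₂ η₁' η₂' : ℝ → ℝ} {k t α₀ : ℝ}
    (hη₁ : ∀ᶠ s in 𝓝 t, HasDerivAt η₁ (η₁' s) s) (hη₁' : HasDerivAt η₁' (-(k * η₁ t)) t)
    (hη₂ : ∀ᶠ s in 𝓝 t, HasDerivAt η₂ (η₂' s) s) (hη₂' : HasDerivAt η₂' (-(k * η₂ t)) t)
    (hw : η₁ t * η₂' t - η₁' t * η₂ t ≠ 0) (hα₀ : α₀ ≠ 0) (d₀ : ℝ) :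
    0 < (d₀ ^ 2 + 1 / α₀ ^ 2) * η₁ t ^ 2 + α₀ ^ 2 * η₂ t ^ 2 + 2 * d₀ * α₀ * η₁ t * η₂ t ∧
      HasDerivAt
        (deriv fun s => √((d₀ ^ 2 + 1 / α₀ ^ 2) * η₁ s ^ 2 + α₀ ^ 2 * η₂ s ^ 2
          + 2 * d₀ * α₀ * η₁ s * η₂ s))
        ((η₁ t * η₂' t - η₁' t * η₂ t) ^ 2
            / √((d₀ ^ 2 + 1 / α₀ ^ 2) * η₁ t ^ 2 + α₀ ^ 2 * η₂ t ^ 2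
              + 2 * d₀ * α₀ * η₁ t * η₂ t) ^ 3
          - k * √((d₀ ^ 2 + 1 / α₀ ^ 2) * η₁ t ^ 2 + α₀ ^ 2 * η₂ t ^ 2
              + 2 * d₀ * α₀ * η₁ t * η₂ t)) t := by
  simp only [radicand_eq_sq_add_sq hα₀]
  rw [← wronskian_div_mul_add_mul hα₀ d₀] at hw ⊢
  have hpos := sq_add_sq_pos_of_wronskian_ne_zero hw
  have hu : ∀ᶠ s in 𝓝 t, HasDerivAt (fun s => η₁ s / α₀) (η₁' s / α₀) s :=
    hη₁.mono fun s hs => hs.div_const α₀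
  have hu' : HasDerivAt (fun s => η₁' s / α₀) (-(k * (η₁ t / α₀))) t :=
    (hη₁'.div_const α₀).congr_deriv (by ring)
  have hv : ∀ᶠ s in 𝓝 t,
      HasDerivAt (fun s => α₀ * η₂ s + d₀ * η₁ s) (α₀ * η₂' s + d₀ * η₁' s) s := by
    filter_upwards [hη₁, hη₂] with s hs₁ hs₂
    exact (hs₂.const_mul α₀).fun_add (hs₁.const_mul d₀)
  have hv' : HasDerivAt (fun s => α₀ * η₂' s + d₀ * η₁' s) (-(k * (α₀ * η₂ t + d₀ * η₁ t))) t :=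
    ((hη₂'.const_mul α₀).fun_add (hη₁'.const_mul d₀)).congr_deriv (by ring)
  have hradial := hasDerivAt_deriv_sqrt_sq_add_sq hu hu' hv hv' hpos
  exact ⟨hpos, hradial⟩

/-- The wave-packet width `α(t) = sqrt((d₀² + 1/α₀²)·η₁² + α₀²·η₂² + 2·d₀·α₀·η₁·η₂)`
built from two oscillator solutions with unit Wronskian is well defined (positive radicand)
and solves the Ermakov–Pinney equation. -/
theorem wave_packet_width_solves_ermakov_pinney
    (ω η₁ η₂ : ℝ → ℝ)
    (hη₁ : Differentiable ℝ η₁) (hη₁' : Differentiable ℝ (deriv η₁))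
    (hη₂ : Differentiable ℝ η₂) (hη₂' : Differentiable ℝ (deriv η₂))
    (h₁eq : ∀ t, deriv (deriv η₁) t + (ω t) ^ 2 * η₁ t = 0)
    (h₂eq : ∀ t, deriv (deriv η₂) t + (ω t) ^ 2 * η₂ t = 0)
    (hWr : ∀ t, η₁ t * deriv η₂ t - deriv η₁ t * η₂ t = 1)
    (α₀ d₀ : ℝ) (hα₀ : 0 < α₀) :
    (∀ t, 0 < (d₀ ^ 2 + 1 / α₀ ^ 2) * (η₁ t) ^ 2 + α₀ ^ 2 * (η₂ t) ^ 2
        + 2 * d₀ * α₀ * η₁ t * η₂ t) ∧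
      ∀ t,
        deriv (deriv (fun t => Real.sqrt ((d₀ ^ 2 + 1 / α₀ ^ 2) * (η₁ t) ^ 2
              + α₀ ^ 2 * (η₂ t) ^ 2 + 2 * d₀ * α₀ * η₁ t * η₂ t))) t
            + (ω t) ^ 2 * Real.sqrt ((d₀ ^ 2 + 1 / α₀ ^ 2) * (η₁ t) ^ 2
              + α₀ ^ 2 * (η₂ t) ^ 2 + 2 * d₀ * α₀ * η₁ t * η₂ t)
          = 1 / (Real.sqrt ((d₀ ^ 2 + 1 / α₀ ^ 2) * (η₁ t) ^ 2
              + α₀ ^ 2 * (η₂ t) ^ 2 + 2 * d₀ * α₀ * η₁ t * η₂ t)) ^ 3 := by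
  have general (t : ℝ) := wave_packet_width_solves_ermakov_pinney_general
    (.of_forall fun s => (hη₁ s).hasDerivAt)
    ((hη₁' t).hasDerivAt.congr_deriv (eq_neg_of_add_eq_zero_left (h₁eq t)))
    (.of_forall fun s => (hη₂ s).hasDerivAt)
    ((hη₂' t).hasDerivAt.congr_deriv (eq_neg_of_add_eq_zero_left (h₂eq t)))
    ((hWr t).trans_ne one_ne_zero) hα₀.ne' d₀
  refine ⟨fun t => (general t).1, fun t => ?_⟩
  rw [(general t).2.deriv, hWr t, one_pow, sub_add_cancel]
end

section
/- Let ω : ℝ → ℝ be differentiable and let α : ℝ → ℝ be twice differentiable with α(t) ≠ 0 for all t and α''(t) + ω(t)² α(t) = 1/α(t)³ for all t. Then w(t) = α(t)² is three times differentiable and satisfies the third-order linear equation of maximal symmetry w'''(t) + 4·ω(t)²·w'(t) + 4·ω(t)·ω'(t)·w(t) = 0 for all t. -/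
/-!
For `w = α²` one has `w'' = 2 (α'² + α α'')`, which contains the top derivative `α''`. The
Ermakov–Pinney equation `α'' + q α = c / α³` turns it into `w'' = 2 (α'² + c / α² - q α²)`, which
can be differentiated once more. Eliminating `α''` a second time, the two contributions
`± 4 c α' / α³` cancel, and `w''' = -4 q w' - 2 q' w` is left. For `q = ω²` the last coefficient is
`2 q' = 4 ω ω'`.
-/

open Filter Topology

section EventualDerivative

variable {𝕜 F : Type*} [NontriviallyNormedField 𝕜] [NormedAddCommGroup F] [NormedSpace 𝕜 F]
  {f g : 𝕜 → F} {g' : F} {t : 𝕜}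

theorem hasDerivAt_deriv_of_eventually_hasDerivAt (hf : ∀ᶠ x in 𝓝 t, HasDerivAt f (g x) x)
    (hg : HasDerivAt g g' t) : HasDerivAt (deriv f) g' t :=
  hg.congr_of_eventuallyEq (hf.mono fun _ hx => hx.deriv)

end EventualDerivative

section ErmakovPinney

variable {𝕜 : Type*} [NontriviallyNormedField 𝕜] {q α β : 𝕜 → 𝕜} {a c q' t : 𝕜}

theorem hasDerivAt_sq_of_hasDerivAt (hα : HasDerivAt α a t) :
    HasDerivAt (fun x => α x ^ 2) (2 * (α t * a)) t := by
  simpa [mul_assoc] using hα.fun_pow 2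

theorem hasDerivAt_two_mul_mul_of_ermakov_pinney (hα : HasDerivAt α (β t) t)
    (hβ : HasDerivAt β (c / α t ^ 3 - q t * α t) t) (hne : α t ≠ 0) :
    HasDerivAt (fun x => 2 * (α x * β x)) (2 * (β t ^ 2 + c / α t ^ 2 - q t * α t ^ 2)) t := by
  refine ((hα.fun_mul hβ).const_mul 2).congr_deriv ?_
  field_simp
  ring

theorem hasDerivAt_const_div_sq (hα : HasDerivAt α a t) (hne : α t ≠ 0) :
    HasDerivAt (fun x => c / α x ^ 2) (-(2 * c * a / α t ^ 3)) t := by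
  refine ((hasDerivAt_const t c).fun_div (hasDerivAt_sq_of_hasDerivAt hα)
    (pow_ne_zero 2 hne)).congr_deriv ?_
  field_simp
  ring

theorem hasDerivAt_two_mul_sq_add_div_sub_of_ermakov_pinney (hq : HasDerivAt q q' t)
    (hα : HasDerivAt α (β t) t) (hβ : HasDerivAt β (c / α t ^ 3 - q t * α t) t)
    (hne : α t ≠ 0) :
    HasDerivAt (fun x => 2 * (β x ^ 2 + c / α x ^ 2 - q x * α x ^ 2))
      (-(4 * q t * (2 * (α t * β t))) - 2 * q' * α t ^ 2) t := by
  have hβ_sq := hasDerivAt_sq_of_hasDerivAt hβ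
  have hdiv : HasDerivAt (fun x => c / α x ^ 2) (-(2 * c * β t / α t ^ 3)) t :=
    hasDerivAt_const_div_sq hα hne
  have hq_mul := hq.fun_mul (hasDerivAt_sq_of_hasDerivAt hα)
  refine (((hβ_sq.fun_add hdiv).fun_sub hq_mul).const_mul 2).congr_deriv ?_
  ring

theorem sq_of_ermakov_pinney_solves_maximal_symmetry_general {s : Set 𝕜} (hs : IsOpen s)
    (hq : DifferentiableOn 𝕜 q s) (hα : DifferentiableOn 𝕜 α s)
    (hα' : DifferentiableOn 𝕜 (deriv α) s) (hne : ∀ t ∈ s, α t ≠ 0)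
    (hEP : ∀ t ∈ s, deriv (deriv α) t + q t * α t = c / α t ^ 3) :
    (DifferentiableOn 𝕜 (fun t => α t ^ 2) s ∧
        DifferentiableOn 𝕜 (deriv fun t => α t ^ 2) s ∧
        DifferentiableOn 𝕜 (deriv (deriv fun t => α t ^ 2)) s) ∧
      ∀ t ∈ s,
        deriv (deriv (deriv fun t => α t ^ 2)) t + 4 * q t * deriv (fun t => α t ^ 2) t
          + 2 * deriv q t * α t ^ 2 = 0 := by
  have hα₁ : ∀ t ∈ s, HasDerivAt α (deriv α t) t := fun t ht => hα.hasDerivAt (hs.mem_nhds ht)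
  have hα₂ : ∀ t ∈ s, HasDerivAt (deriv α) (c / α t ^ 3 - q t * α t) t := fun t ht =>
    (hα'.hasDerivAt (hs.mem_nhds ht)).congr_deriv (eq_sub_of_add_eq (hEP t ht))
  have hw₁ : ∀ t ∈ s, HasDerivAt (fun x => α x ^ 2) (2 * (α t * deriv α t)) t := fun t ht =>
    hasDerivAt_sq_of_hasDerivAt (hα₁ t ht)
  have hw₂ : ∀ t ∈ s, HasDerivAt (deriv fun x => α x ^ 2)
      (2 * (deriv α t ^ 2 + c / α t ^ 2 - q t * α t ^ 2)) t := fun t ht =>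
    hasDerivAt_deriv_of_eventually_hasDerivAt (eventually_of_mem (hs.mem_nhds ht) hw₁)
      (hasDerivAt_two_mul_mul_of_ermakov_pinney (hα₁ t ht) (hα₂ t ht) (hne t ht))
  have hw₃ : ∀ t ∈ s, HasDerivAt (deriv (deriv fun x => α x ^ 2))
      (-(4 * q t * (2 * (α t * deriv α t))) - 2 * deriv q t * α t ^ 2) t := fun t ht =>
    hasDerivAt_deriv_of_eventually_hasDerivAt (eventually_of_mem (hs.mem_nhds ht) hw₂)
      (hasDerivAt_two_mul_sq_add_div_sub_of_ermakov_pinney (hq.hasDerivAt (hs.mem_nhds ht))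
        (hα₁ t ht) (hα₂ t ht) (hne t ht))
  refine ⟨⟨fun t ht => (hw₁ t ht).differentiableAt.differentiableWithinAt,
    fun t ht => (hw₂ t ht).differentiableAt.differentiableWithinAt,
    fun t ht => (hw₃ t ht).differentiableAt.differentiableWithinAt⟩, fun t ht => ?_⟩
  rw [(hw₃ t ht).deriv, (hw₁ t ht).deriv]
  ring

end ErmakovPinney

/-- If `α` solves the Ermakov–Pinney equation with differentiable frequency `ω` and never
vanishes, then `w = α²` solves the third-order linear equation of maximal symmetry
`w''' + 4ω²w' + 4ωω'w = 0`. -/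
theorem sq_of_ermakov_pinney_solves_maximal_symmetry
    (ω α : ℝ → ℝ)
    (hω : Differentiable ℝ ω)
    (hα : Differentiable ℝ α) (hα' : Differentiable ℝ (deriv α))
    (hαne : ∀ t, α t ≠ 0)
    (hαeq : ∀ t, deriv (deriv α) t + (ω t) ^ 2 * α t = 1 / (α t) ^ 3) :
    (Differentiable ℝ (fun t => (α t) ^ 2) ∧
        Differentiable ℝ (deriv (fun t => (α t) ^ 2)) ∧
        Differentiable ℝ (deriv (deriv (fun t => (α t) ^ 2)))) ∧
      ∀ t,
        deriv (deriv (deriv (fun t => (α t) ^ 2))) t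
            + 4 * (ω t) ^ 2 * deriv (fun t => (α t) ^ 2) t
            + 4 * ω t * deriv ω t * (α t) ^ 2 = 0 := by
  have hω_sq (t : ℝ) : 2 * deriv (fun x => ω x ^ 2) t = 4 * ω t * deriv ω t := by
    rw [(hasDerivAt_sq_of_hasDerivAt (hω t).hasDerivAt).deriv]
    ring
  simpa only [differentiableOn_univ, Set.mem_univ, forall_const, hω_sq] using
    sq_of_ermakov_pinney_solves_maximal_symmetry_general isOpen_univ
      (hω.fun_pow 2).differentiableOn hα.differentiableOn hα'.differentiableOn
      (fun t _ => hαne t) (fun t _ => hαeq t)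
end

section
/- Let ω : ℝ → ℝ be differentiable and let η : ℝ → ℝ be twice differentiable with η''(t) + ω(t)² η(t) = 0 for all t. Then w(t) = η(t)² is three times differentiable and satisfies the third-order linear equation of maximal symmetry w'''(t) + 4·ω(t)²·w'(t) + 4·ω(t)·ω'(t)·w(t) = 0 for all t. -/
/-!
If `u` and `v` both solve `y'' + q y = 0`, then `w = u v` has `w'' = 2 (u' v' - q u v)`: the second
derivatives of the factors only contribute multiples of `w`. Differentiating once more, every second
derivative is again replaced by `-q` times the function, and `(u' v')' = -q (u v' + u' v) = -q w'`
closes the system, giving `w''' = -4 q w' - 2 q' w`. The square of `η` is the case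
`q = ω²`, `u = v = η`.
-/

section

variable {𝕜 A : Type*} [NontriviallyNormedField 𝕜] [NormedCommRing A] [NormedAlgebra 𝕜 A]

/-- A global solution `u` of the linear oscillator equation `u'' + q u = 0`. The coefficient `q`
takes the place of the squared frequency, so that it need not be a square. Differentiability of `u`
and of `deriv u` is part of the definition, because `deriv` is `0` where no derivative exists. -/
structure IsOscillatorSolution (q u : 𝕜 → A) : Prop where
  differentiable : Differentiable 𝕜 u
  differentiable_deriv : Differentiable 𝕜 (deriv u)
  deriv_deriv_add_mul_eq_zero : ∀ t, deriv (deriv u) t + q t * u t = 0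

namespace IsOscillatorSolution

variable {q u v : 𝕜 → A}

theorem hasDerivAt (hu : IsOscillatorSolution q u) (t : 𝕜) : HasDerivAt u (deriv u t) t :=
  (hu.differentiable t).hasDerivAt

theorem hasDerivAt_deriv (hu : IsOscillatorSolution q u) (t : 𝕜) :
    HasDerivAt (deriv u) (-(q t * u t)) t := by
  rw [← eq_neg_of_add_eq_zero_left (hu.deriv_deriv_add_mul_eq_zero t)]
  exact (hu.differentiable_deriv t).hasDerivAt

theorem hasDerivAt_mul (hu : IsOscillatorSolution q u) (hv : IsOscillatorSolution q v) (t : 𝕜) :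
    HasDerivAt (fun s => u s * v s) (deriv u t * v t + u t * deriv v t) t :=
  (hu.hasDerivAt t).fun_mul (hv.hasDerivAt t)

theorem hasDerivAt_deriv_mul (hu : IsOscillatorSolution q u) (hv : IsOscillatorSolution q v)
    (t : 𝕜) :
    HasDerivAt (deriv fun s => u s * v s) (2 * (deriv u t * deriv v t - q t * (u t * v t))) t := by
  rw [deriv_eq (hu.hasDerivAt_mul hv)]
  refine (((hu.hasDerivAt_deriv t).fun_mul (hv.hasDerivAt t)).fun_add
    ((hu.hasDerivAt t).fun_mul (hv.hasDerivAt_deriv t))).congr_deriv ?_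
  ring

theorem hasDerivAt_deriv_mul_deriv (hu : IsOscillatorSolution q u)
    (hv : IsOscillatorSolution q v) (t : 𝕜) :
    HasDerivAt (fun s => deriv u s * deriv v s) (-(q t * deriv (fun s => u s * v s) t)) t := by
  rw [(hu.hasDerivAt_mul hv t).deriv]
  refine ((hu.hasDerivAt_deriv t).fun_mul (hv.hasDerivAt_deriv t)).congr_deriv ?_
  ring

theorem hasDerivAt_deriv_deriv_mul {t : 𝕜} {q' : A} (hu : IsOscillatorSolution q u)
    (hv : IsOscillatorSolution q v) (hq : HasDerivAt q q' t) :
    HasDerivAt (deriv (deriv fun s => u s * v s))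
      (-(4 * q t * deriv (fun s => u s * v s) t + 2 * q' * (u t * v t))) t := by
  have hw : HasDerivAt (fun s => u s * v s) (deriv (fun s => u s * v s) t) t :=
    (hu.hasDerivAt_mul hv t).differentiableAt.hasDerivAt
  rw [deriv_eq (hu.hasDerivAt_deriv_mul hv)]
  refine (((hu.hasDerivAt_deriv_mul_deriv hv t).fun_sub (hq.fun_mul hw)).const_mul 2).congr_deriv ?_
  ring

end IsOscillatorSolution

theorem two_mul_deriv_sq {f : 𝕜 → A} {t : 𝕜} (hf : DifferentiableAt 𝕜 f t) :
    2 * deriv (fun s => f s ^ 2) t = 4 * f t * deriv f t := by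
  rw [deriv_fun_pow hf]
  ring

theorem sq_of_oscillator_solves_maximal_symmetry_general {q u v : 𝕜 → A}
    (hq : Differentiable 𝕜 q) (hu : IsOscillatorSolution q u) (hv : IsOscillatorSolution q v) :
    (Differentiable 𝕜 (fun t => u t * v t) ∧
        Differentiable 𝕜 (deriv fun t => u t * v t) ∧
        Differentiable 𝕜 (deriv (deriv fun t => u t * v t))) ∧
      ∀ t,
        deriv (deriv (deriv fun t => u t * v t)) t
            + 4 * q t * deriv (fun t => u t * v t) t
            + 2 * deriv q t * (u t * v t) = 0 := by
  have hw''' (t : 𝕜) := hu.hasDerivAt_deriv_deriv_mul hv (hq t).hasDerivAt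
  refine ⟨⟨fun t => (hu.hasDerivAt_mul hv t).differentiableAt,
    fun t => (hu.hasDerivAt_deriv_mul hv t).differentiableAt,
    fun t => (hw''' t).differentiableAt⟩, fun t => ?_⟩
  rw [(hw''' t).deriv]
  ring

end

/-- If `η` solves the linear oscillator equation with differentiable frequency `ω`, then
`w = η²` solves the third-order linear equation of maximal symmetry
`w''' + 4ω²w' + 4ωω'w = 0`. -/
theorem sq_of_oscillator_solves_maximal_symmetry
    (ω η : ℝ → ℝ)
    (hω : Differentiable ℝ ω)
    (hη : Differentiable ℝ η) (hη' : Differentiable ℝ (deriv η))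
    (hηeq : ∀ t, deriv (deriv η) t + (ω t) ^ 2 * η t = 0) :
    (Differentiable ℝ (fun t => (η t) ^ 2) ∧
        Differentiable ℝ (deriv (fun t => (η t) ^ 2)) ∧
        Differentiable ℝ (deriv (deriv (fun t => (η t) ^ 2)))) ∧
      ∀ t,
        deriv (deriv (deriv (fun t => (η t) ^ 2))) t
            + 4 * (ω t) ^ 2 * deriv (fun t => (η t) ^ 2) t
            + 4 * ω t * deriv ω t * (η t) ^ 2 = 0 := by
  have hsol : IsOscillatorSolution (fun t => (ω t) ^ 2) η := ⟨hη, hη', hηeq⟩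
  simpa only [two_mul_deriv_sq (hω _), ← sq] using
    sq_of_oscillator_solves_maximal_symmetry_general (hω.fun_pow 2) hsol hsol
end

section
/- Riccati-to-Ermakov reduction: let ω : ℝ → ℝ and let Q : ℝ → ℂ be differentiable with Q'(t) + Q(t)² + ω(t)² = 0 for all t (where ω(t)² is viewed as a complex number) and Im Q(t) > 0 for all t. Then the function α(t) = (Im Q(t))^(−1/2) is real-valued, strictly positive and twice differentiable, satisfies Re Q(t) = α'(t)/α(t) for all t, and satisfies the Ermakov–Pinney equation α''(t) + ω(t)² α(t) = 1/α(t)³ for all t. -/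
/-!
The imaginary part of the Riccati equation, `(Im Q)' = -2 (Re Q) (Im Q)`, makes `Re Q` the
logarithmic derivative of `α = (Im Q)^(-1/2)`. Differentiating `α' = (Re Q) α` once more gives
`α'' = ((Re Q)' + (Re Q)²) α`, which the real part of the Riccati equation turns into
`((Im Q)² - ω²) α`, and `(Im Q)² α = 1 / α³` because `α² = 1 / Im Q`.
-/

open Filter Set Topology

theorem hasDerivAt_rpow_const_of_hasDerivAt_mul {f : ℝ → ℝ} {c t : ℝ} (p : ℝ)
    (hf : HasDerivAt f (c * f t) t) (hft : f t ≠ 0) :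
    HasDerivAt (fun s => f s ^ p) (p * c * f t ^ p) t := by
  refine (hf.rpow_const (p := p) (Or.inl hft)).congr_deriv ?_
  rw [Real.rpow_sub_one hft]
  field_simp

theorem hasDerivAt_deriv_of_eventually_hasDerivAt_mul {𝕜 : Type*} [NontriviallyNormedField 𝕜]
    {f u : 𝕜 → 𝕜} {u' t : 𝕜} (hf : ∀ᶠ s in 𝓝 t, HasDerivAt f (u s * f s) s)
    (hu : HasDerivAt u u' t) :
    HasDerivAt (deriv f) ((u' + u t ^ 2) * f t) t := by
  have hderiv : deriv f =ᶠ[𝓝 t] fun s => u s * f s := hf.mono fun _ hs => hs.deriv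
  refine ((hu.fun_mul hf.self_of_nhds).congr_of_eventuallyEq hderiv).congr_deriv ?_
  ring

section Riccati

variable {Q : ℝ → ℂ} {k t : ℝ}

theorem hasDerivAt_re_of_riccati (hQ : DifferentiableAt ℝ Q t)
    (hQeq : deriv Q t + Q t ^ 2 + k = 0) :
    HasDerivAt (fun s => (Q s).re) ((Q t).im ^ 2 - (Q t).re ^ 2 - k) t := by
  refine (Complex.reCLM.hasFDerivAt.comp_hasDerivAt t hQ.hasDerivAt).congr_deriv ?_
  have hre : (deriv Q t).re + ((Q t).re * (Q t).re - (Q t).im * (Q t).im) + k = 0 := by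
    simpa [sq] using congrArg Complex.re hQeq
  rw [Complex.reCLM_apply]
  linear_combination hre

theorem hasDerivAt_im_of_riccati (hQ : DifferentiableAt ℝ Q t)
    (hQeq : deriv Q t + Q t ^ 2 + k = 0) :
    HasDerivAt (fun s => (Q s).im) (-2 * (Q t).re * (Q t).im) t := by
  refine (Complex.imCLM.hasFDerivAt.comp_hasDerivAt t hQ.hasDerivAt).congr_deriv ?_
  have him : (deriv Q t).im + ((Q t).re * (Q t).im + (Q t).im * (Q t).re) = 0 := by
    simpa [sq] using congrArg Complex.im hQeq
  rw [Complex.imCLM_apply]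
  linear_combination him

end Riccati

/-- The width `α = (Im Q)^(-1/2)` of the Gaussian wave packet with Riccati variable `Q`. It is
meaningful only where `Im Q > 0`, since `Real.rpow` has junk values at nonpositive bases. -/
noncomputable def wavePacketWidth (Q : ℝ → ℂ) (t : ℝ) : ℝ :=
  (Q t).im ^ (-(1 / 2 : ℝ))

section WavePacketWidth

variable {Q : ℝ → ℂ} {k t : ℝ}

theorem wavePacketWidth_pos (hIm : 0 < (Q t).im) : 0 < wavePacketWidth Q t :=
  Real.rpow_pos_of_pos hIm _

theorem wavePacketWidth_sq (hIm : 0 ≤ (Q t).im) : wavePacketWidth Q t ^ 2 = (Q t).im⁻¹ := by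
  rw [wavePacketWidth, ← Real.rpow_mul_natCast hIm, ← Real.rpow_neg_one]
  norm_num

theorem im_sq_mul_wavePacketWidth (hIm : 0 < (Q t).im) :
    (Q t).im ^ 2 * wavePacketWidth Q t = 1 / wavePacketWidth Q t ^ 3 := by
  have hα : wavePacketWidth Q t ≠ 0 := (wavePacketWidth_pos hIm).ne'
  rw [← inv_inv (Q t).im, ← wavePacketWidth_sq hIm.le]
  field_simp

theorem hasDerivAt_wavePacketWidth (hQ : DifferentiableAt ℝ Q t)
    (hQeq : deriv Q t + Q t ^ 2 + k = 0) (hIm : 0 < (Q t).im) :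
    HasDerivAt (wavePacketWidth Q) ((Q t).re * wavePacketWidth Q t) t := by
  refine (hasDerivAt_rpow_const_of_hasDerivAt_mul (-(1 / 2))
    (hasDerivAt_im_of_riccati hQ hQeq) hIm.ne').congr_deriv ?_
  rw [wavePacketWidth]
  ring

theorem hasDerivAt_deriv_wavePacketWidth {k : ℝ → ℝ} (hQ : ∀ᶠ s in 𝓝 t, DifferentiableAt ℝ Q s)
    (hQeq : ∀ᶠ s in 𝓝 t, deriv Q s + Q s ^ 2 + k s = 0) (hIm : 0 < (Q t).im) :
    HasDerivAt (deriv (wavePacketWidth Q))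
      (1 / wavePacketWidth Q t ^ 3 - k t * wavePacketWidth Q t) t := by
  have hIm_near : ∀ᶠ s in 𝓝 t, 0 < (Q s).im :=
    (Complex.continuous_im.continuousAt.comp hQ.self_of_nhds.continuousAt).eventually_const_lt hIm
  have hα : ∀ᶠ s in 𝓝 t,
      HasDerivAt (wavePacketWidth Q) ((Q s).re * wavePacketWidth Q s) s := by
    filter_upwards [hQ, hQeq, hIm_near] with s hs hs_eq hs_im
    exact hasDerivAt_wavePacketWidth hs hs_eq hs_im
  refine (hasDerivAt_deriv_of_eventually_hasDerivAt_mul hα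
    (hasDerivAt_re_of_riccati hQ.self_of_nhds hQeq.self_of_nhds)).congr_deriv ?_
  rw [← im_sq_mul_wavePacketWidth hIm]
  ring

end WavePacketWidth

theorem riccati_to_ermakov_pinney_general {s : Set ℝ} (hs : IsOpen s) {k : ℝ → ℝ} {Q : ℝ → ℂ}
    (hQ : DifferentiableOn ℝ Q s) (hQeq : ∀ t ∈ s, deriv Q t + Q t ^ 2 + k t = 0)
    (hIm : ∀ t ∈ s, 0 < (Q t).im) :
    (∀ t ∈ s, 0 < wavePacketWidth Q t) ∧
      (DifferentiableOn ℝ (wavePacketWidth Q) s ∧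
        DifferentiableOn ℝ (deriv (wavePacketWidth Q)) s) ∧
      (∀ t ∈ s, (Q t).re = deriv (wavePacketWidth Q) t / wavePacketWidth Q t) ∧
      ∀ t ∈ s, deriv (deriv (wavePacketWidth Q)) t + k t * wavePacketWidth Q t =
        1 / wavePacketWidth Q t ^ 3 := by
  have hpos : ∀ t ∈ s, 0 < wavePacketWidth Q t := fun t ht => wavePacketWidth_pos (hIm t ht)
  have hα : ∀ t ∈ s, HasDerivAt (wavePacketWidth Q) ((Q t).re * wavePacketWidth Q t) t :=
    fun t ht => hasDerivAt_wavePacketWidth (hQ.differentiableAt (hs.mem_nhds ht))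
      (hQeq t ht) (hIm t ht)
  have hα' : ∀ t ∈ s, HasDerivAt (deriv (wavePacketWidth Q))
      (1 / wavePacketWidth Q t ^ 3 - k t * wavePacketWidth Q t) t :=
    fun t ht => hasDerivAt_deriv_wavePacketWidth (hQ.eventually_differentiableAt (hs.mem_nhds ht))
      (eventually_of_mem (hs.mem_nhds ht) hQeq) (hIm t ht)
  refine ⟨hpos, ⟨fun t ht => (hα t ht).differentiableAt.differentiableWithinAt,
    fun t ht => (hα' t ht).differentiableAt.differentiableWithinAt⟩, fun t ht => ?_, fun t ht => ?_⟩
  · rw [(hα t ht).deriv, mul_div_cancel_right₀ _ (hpos t ht).ne']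
  · rw [(hα' t ht).deriv, sub_add_cancel]

open Complex in
/-- Riccati-to-Ermakov reduction: if `Q : ℝ → ℂ` solves the complex Riccati equation
`Q' + Q² + ω² = 0` with `Im Q > 0`, then `α = (Im Q)^(−1/2)` is positive,
twice differentiable, satisfies `Re Q = α'/α`, and solves the Ermakov–Pinney equation. -/
theorem riccati_to_ermakov_pinney
    (ω : ℝ → ℝ) (Q : ℝ → ℂ)
    (hQ : Differentiable ℝ Q)
    (hQeq : ∀ t, deriv Q t + (Q t) ^ 2 + ((ω t : ℂ)) ^ 2 = 0)
    (hIm : ∀ t, 0 < (Q t).im) :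
    (∀ t, 0 < ((Q t).im) ^ (-(1 / 2 : ℝ))) ∧
      (Differentiable ℝ (fun t => ((Q t).im) ^ (-(1 / 2 : ℝ))) ∧
        Differentiable ℝ (deriv (fun t => ((Q t).im) ^ (-(1 / 2 : ℝ))))) ∧
      (∀ t, (Q t).re
          = deriv (fun t => ((Q t).im) ^ (-(1 / 2 : ℝ))) t / ((Q t).im) ^ (-(1 / 2 : ℝ))) ∧
      ∀ t,
        deriv (deriv (fun t => ((Q t).im) ^ (-(1 / 2 : ℝ)))) t
            + (ω t) ^ 2 * ((Q t).im) ^ (-(1 / 2 : ℝ))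
          = 1 / (((Q t).im) ^ (-(1 / 2 : ℝ))) ^ 3 := by
  have hα := riccati_to_ermakov_pinney_general (k := fun t => ω t ^ 2) isOpen_univ
    hQ.differentiableOn (by simpa using hQeq) fun t _ => hIm t
  simp only [differentiableOn_univ, mem_univ, forall_const] at hα
  exact hα
end
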